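/- Let r : X → Y be a pointed map between pointed topological spaces, l : Y → X a pointed map, and h a pointed homotopy from the identity of X to l ∘ r (so l is a left homotopy inverse of r). Then the homotopy fiber of r is homotopy equivalent to the loop space of the homotopy fiber of l. -/

import Mathlib

open ContinuousMap

variable {X Y : Type*} [TopologicalSpace X] [TopologicalSpace Y]

/-- The homotopy fiber of `f : X → Y` over `y₀ : Y`: pairs `(x, γ)` of a point of `X` and a
path from `f x` to `y₀`. -/
def HoFib (f : C(X, Y)) (y₀ : Y) : Type _ :=
  {p : X × C(unitInterval, Y) // p.2 0 = f p.1 ∧ p.2 1 = y₀}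

instance (f : C(X, Y)) (y₀ : Y) : TopologicalSpace (HoFib f y₀) :=
  inferInstanceAs (TopologicalSpace
    {p : X × C(unitInterval, Y) // p.2 0 = f p.1 ∧ p.2 1 = y₀})

/-- The basepoint of the homotopy fiber of a pointed map: the basepoint of the source together
with the constant path. -/
def HoFib.base (f : C(X, Y)) {x₀ : X} {y₀ : Y} (hf : f x₀ = y₀) : HoFib f y₀ :=
  ⟨(x₀, ContinuousMap.const _ y₀), by simp [hf], rfl⟩

namespace HoFib

open unitInterval

variable {Z : Type*} [TopologicalSpace Z] {f : C(X, Y)} {x₀ : X} {y₀ : Y}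

/-- The point of the source underlying a point of the homotopy fiber. -/
def point (a : HoFib f y₀) : X := a.1.1

/-- The path underlying a point of the homotopy fiber. -/
def path (a : HoFib f y₀) : C(I, Y) := a.1.2

@[simp]
theorem path_zero (a : HoFib f y₀) : a.path 0 = f a.point := a.2.1

@[simp]
theorem path_one (a : HoFib f y₀) : a.path 1 = y₀ := a.2.2

@[simp]
theorem base_point (hf : f x₀ = y₀) : (base f hf).point = x₀ := rfl

@[simp]
theorem base_path (hf : f x₀ = y₀) (t : I) : (base f hf).path t = y₀ := rfl

@[ext]
theorem ext {a b : HoFib f y₀} (hpoint : a.point = b.point) (hpath : ∀ t, a.path t = b.path t) :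
    a = b :=
  Subtype.ext (Prod.ext hpoint (ContinuousMap.ext hpath))

@[fun_prop]
theorem continuous_point : Continuous (point : HoFib f y₀ → X) :=
  continuous_fst.comp continuous_subtype_val

@[fun_prop]
theorem continuous_path : Continuous (path : HoFib f y₀ → C(I, Y)) :=
  continuous_snd.comp continuous_subtype_val

/-- A continuous map into the homotopy fiber, given by a continuous family of points and a
continuous family of paths. -/
def lift (u : Z → X) (p : Z → I → Y) (hu : Continuous u) (hp : Continuous fun z : Z × I ↦ p z.1 z.2)
    (h₀ : ∀ z, p z 0 = f (u z)) (h₁ : ∀ z, p z 1 = y₀) : C(Z, HoFib f y₀) where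
  toFun z := ⟨(u z, ⟨p z, by fun_prop⟩), h₀ z, h₁ z⟩
  continuous_toFun := Continuous.subtype_mk
    (hu.prodMk (ContinuousMap.curry ⟨fun z : Z × I ↦ p z.1 z.2, hp⟩).continuous) _

section lift

variable {u : Z → X} {p : Z → I → Y} {hu : Continuous u}
  {hp : Continuous fun z : Z × I ↦ p z.1 z.2} {h₀ : ∀ z, p z 0 = f (u z)} {h₁ : ∀ z, p z 1 = y₀}

@[simp]
theorem lift_point (z : Z) : (lift u p hu hp h₀ h₁ z).point = u z := rfl

@[simp]
theorem lift_path (z : Z) (t : I) : (lift u p hu hp h₀ h₁ z).path t = p z t := rfl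

end lift

/-- The retraction of the real line onto the unit interval. -/
noncomputable def clamp (s : ℝ) : I := Set.projIcc 0 1 zero_le_one s

@[fun_prop]
theorem continuous_clamp : Continuous clamp := continuous_projIcc (h := zero_le_one)

theorem clamp_of_nonpos {s : ℝ} (hs : s ≤ 0) : clamp s = 0 := Set.projIcc_of_le_left _ hs

theorem clamp_of_one_le {s : ℝ} (hs : 1 ≤ s) : clamp s = 1 := Set.projIcc_of_right_le _ hs

@[simp]
theorem clamp_zero : clamp 0 = 0 := clamp_of_nonpos le_rfl

@[simp]
theorem clamp_one : clamp 1 = 1 := clamp_of_one_le le_rfl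

@[simp]
theorem clamp_coe (t : I) : clamp t = t := Set.projIcc_val _ t

section Contraction

variable {c : X} (H : HomotopyRel (ContinuousMap.id X) (ContinuousMap.const X c) {c})

/-- The path of a point of the homotopy fiber of `f`, prolonged to negative times by the image
under `f` of a contraction of the source. -/
noncomputable def prolong (a : HoFib f y₀) (s : ℝ) : Y :=
  if s ≤ 0 then f (H (clamp (-s), a.point)) else a.path (clamp s)

theorem prolong_of_nonpos (a : HoFib f y₀) {s : ℝ} (hs : s ≤ 0) :
    prolong H a s = f (H (clamp (-s), a.point)) := if_pos hs

theorem prolong_of_nonneg (a : HoFib f y₀) {s : ℝ} (hs : 0 ≤ s) :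
    prolong H a s = a.path (clamp s) := by
  rcases hs.eq_or_lt with rfl | hs
  · simp [prolong]
  · exact if_neg hs.not_ge

theorem continuous_prolong : Continuous fun z : HoFib f y₀ × ℝ ↦ prolong H z.1 z.2 := by
  refine Continuous.if_le (by fun_prop) (by fun_prop) (by fun_prop) (by fun_prop) ?_
  rintro ⟨a, s⟩ (rfl : s = 0)
  simp

@[fun_prop]
theorem continuous_prolong_comp {a : Z → HoFib f y₀} {s : Z → ℝ} (ha : Continuous a)
    (hs : Continuous s) : Continuous fun z ↦ prolong H (a z) (s z) :=
  (continuous_prolong H).comp (ha.prodMk hs)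

/-- A loop at `y₀ = f c`, regarded as a point of the homotopy fiber lying over `c`. -/
def ofLoop (hc : f c = y₀) : C(Path y₀ y₀, HoFib f y₀) :=
  lift (fun _ ↦ c) (fun w t ↦ w t) (by fun_prop) (by fun_prop) (by simp [hc]) (by simp)

/-- The loops obtained from the prolonged paths starting at time `-t`, for a family of points
of the homotopy fiber for which these start at `y₀`. -/
noncomputable def loopOfProlong (a : C(Z, HoFib f y₀)) (t : C(Z, I))
    (h₀ : ∀ z, f (H (t z, (a z).point)) = y₀) : C(Z, Path y₀ y₀) where
  toFun z :=
    { toFun s := prolong H (a z) (s - t z * (1 - s))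
      continuous_toFun := by fun_prop
      source' := by
        rw [prolong_of_nonpos _ _ (by simpa using (t z).2.1)]
        simpa using h₀ z
      target' := by
        rw [prolong_of_nonneg _ _ (by simp)]
        simp }
  continuous_toFun := Path.continuous_uncurry_iff.mp <|
    show Continuous fun z : Z × I ↦ prolong H (a z.1) (z.2 - t z.1 * (1 - z.2)) by fun_prop

/-- The homotopy fiber over `f c` of a map whose source contracts to `c`, relative to `c`, is
homotopy equivalent to the loop space of the target. -/
noncomputable def homotopyEquivLoop (hc : f c = y₀) : HomotopyEquiv (HoFib f y₀) (Path y₀ y₀) where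
  toFun := loopOfProlong H (ContinuousMap.id _) (ContinuousMap.const _ 1) (by simp [hc])
  invFun := ofLoop hc
  left_inv := by
    refine Homotopic.symm ⟨⟨lift (fun z : I × HoFib f y₀ ↦ H (z.1, z.2.point))
      (fun z s ↦ prolong H z.2 (s - z.1 * (1 - s))) (by fun_prop) (by fun_prop) ?_ ?_, ?_, ?_⟩⟩
    · rintro ⟨t, a⟩
      rw [prolong_of_nonpos _ _ (by simpa using t.2.1)]
      simp
    · rintro ⟨t, a⟩
      rw [prolong_of_nonneg _ _ (by simp)]
      simp
    · intro a
      ext s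
      · simp
      · simp [prolong_of_nonneg _ _ s.2.1]
    · intro a
      ext s
      · simp [ofLoop]
      · simp [ofLoop, loopOfProlong]
  right_inv := by
    have hH (t : I) : H (t, c) = c := H.eq_fst t rfl
    refine Homotopic.symm ⟨⟨loopOfProlong H ((ofLoop hc).comp ContinuousMap.snd) ContinuousMap.fst
      ?_, ?_, ?_⟩⟩
    · rintro ⟨t, w⟩
      simp [ofLoop, hH, hc]
    · intro w
      ext s
      simp [loopOfProlong, prolong_of_nonneg _ _ s.2.1, ofLoop]
    · intro w
      ext s
      simp [loopOfProlong]

end Contraction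

section Retract

variable {r : C(X, Y)} {l : C(Y, X)}
  (h : HomotopyRel (ContinuousMap.id X) (l.comp r) {x₀})

/-- The path from `x` to `x₀` obtained from a point `(x, δ)` of the homotopy fiber of `l ∘ r` by
traversing `h` on `[-1, 0]` and `δ` on `[0, 1]`. -/
noncomputable def track (a : HoFib (l.comp r) x₀) (s : ℝ) : X :=
  if s ≤ 0 then h (clamp (1 + s), a.point) else a.path (clamp s)

theorem track_of_nonpos (a : HoFib (l.comp r) x₀) {s : ℝ} (hs : s ≤ 0) :
    track h a s = h (clamp (1 + s), a.point) := if_pos hs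

theorem track_of_nonneg (a : HoFib (l.comp r) x₀) {s : ℝ} (hs : 0 ≤ s) :
    track h a s = a.path (clamp s) := by
  rcases hs.eq_or_lt with rfl | hs
  · simp [track]
  · exact if_neg hs.not_ge

@[simp]
theorem track_neg_one (a : HoFib (l.comp r) x₀) : track h a (-1) = a.point := by
  simp [track_of_nonpos]

@[simp]
theorem track_one (a : HoFib (l.comp r) x₀) : track h a 1 = x₀ := by
  simp [track_of_nonneg]

theorem continuous_track : Continuous fun z : HoFib (l.comp r) x₀ × ℝ ↦ track h z.1 z.2 := by
  refine Continuous.if_le (by fun_prop) (by fun_prop) (by fun_prop) (by fun_prop) ?_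
  rintro ⟨a, s⟩ (rfl : s = 0)
  simp

@[fun_prop]
theorem continuous_track_comp {a : Z → HoFib (l.comp r) x₀} {s : Z → ℝ} (ha : Continuous a)
    (hs : Continuous s) : Continuous fun z ↦ track h (a z) (s z) :=
  (continuous_track h).comp (ha.prodMk hs)

/-- The path from `l (r x)` to `l (r x)` and on to `x₀` which runs backwards along `h` for time
`u`, returns, and then follows the path of the given point of the homotopy fiber from time `0`
on. -/
noncomputable def detour (a : HoFib (l.comp r) x₀) (u s : ℝ) : X :=
  if s ≤ 0 then h (clamp (1 - u + |s + u|), a.point) else a.path (clamp s)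

theorem detour_of_nonpos (a : HoFib (l.comp r) x₀) (u : ℝ) {s : ℝ} (hs : s ≤ 0) :
    detour h a u s = h (clamp (1 - u + |s + u|), a.point) := if_pos hs

theorem detour_of_nonneg (a : HoFib (l.comp r) x₀) {u s : ℝ} (hu : 0 ≤ u) (hs : 0 ≤ s) :
    detour h a u s = a.path (clamp s) := by
  rcases hs.eq_or_lt with rfl | hs
  · simp [detour, abs_of_nonneg hu]
  · exact if_neg hs.not_ge

theorem continuous_detour :
    Continuous fun z : HoFib (l.comp r) x₀ × I × ℝ ↦ detour h z.1 z.2.1 z.2.2 := by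
  refine Continuous.if_le (by fun_prop) (by fun_prop) (by fun_prop) (by fun_prop) ?_
  rintro ⟨a, u, s⟩ (rfl : s = 0)
  simp [abs_of_nonneg u.2.1]

@[fun_prop]
theorem continuous_detour_comp {a : Z → HoFib (l.comp r) x₀} {u : Z → I} {s : Z → ℝ}
    (ha : Continuous a) (hu : Continuous u) (hs : Continuous s) :
    Continuous fun z ↦ detour h (a z) (u z) (s z) :=
  (continuous_detour h).comp (ha.prodMk (hu.prodMk hs))

/-- The path from `l (r z)` to `x₀`, where `z` is the position of the track at time `t`, which
runs backwards along `h` on `[-2, -1]` and then follows the track. -/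
noncomputable def shrink (a : HoFib (l.comp r) x₀) (t s : ℝ) : X :=
  if s ≤ -1 then h (clamp (-1 - s), track h a t) else track h a (max s t)

theorem shrink_of_le (a : HoFib (l.comp r) x₀) (t : ℝ) {s : ℝ} (hs : s ≤ -1) :
    shrink h a t s = h (clamp (-1 - s), track h a t) := if_pos hs

theorem shrink_of_ge (a : HoFib (l.comp r) x₀) {t s : ℝ} (ht : -1 ≤ t) (hs : -1 ≤ s) :
    shrink h a t s = track h a (max s t) := by
  rcases hs.eq_or_lt with rfl | hs
  · simp [shrink, max_eq_right ht]
  · exact if_neg hs.not_ge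

theorem continuous_shrink :
    Continuous fun z : HoFib (l.comp r) x₀ × I × ℝ ↦ shrink h z.1 (2 * z.2.1 - 1) z.2.2 := by
  refine Continuous.if_le (by fun_prop) (by fun_prop) (by fun_prop) (by fun_prop) ?_
  rintro ⟨a, t, s⟩ (rfl : s = -1)
  have : (-1 : ℝ) ≤ 2 * t - 1 := by linarith [t.2.1]
  simp [max_eq_right this]

@[fun_prop]
theorem continuous_shrink_comp {a : Z → HoFib (l.comp r) x₀} {t : Z → I} {s : Z → ℝ}
    (ha : Continuous a) (ht : Continuous t) (hs : Continuous s) :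
    Continuous fun z ↦ shrink h (a z) (2 * t z - 1) (s z) :=
  (continuous_shrink h).comp (ha.prodMk (ht.prodMk hs))

theorem detour_one (a : HoFib (l.comp r) x₀) (s : ℝ) : detour h a 1 s = shrink h a (-1) s := by
  rcases le_total s (-1) with hs | hs
  · rw [detour_of_nonpos _ _ _ (by linarith), shrink_of_le _ _ _ hs, track_neg_one,
      abs_of_nonpos (by linarith)]
    ring_nf
  · rw [shrink_of_ge _ _ le_rfl hs, max_eq_left hs]
    rcases le_total s 0 with hs₀ | hs₀
    · rw [detour_of_nonpos _ _ _ hs₀, track_of_nonpos _ _ hs₀, abs_of_nonneg (by linarith)]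
      ring_nf
    · rw [detour_of_nonneg _ _ zero_le_one hs₀, track_of_nonneg _ _ hs₀]

theorem track_base (hlr : l.comp r x₀ = x₀) (s : ℝ) : track h (base (l.comp r) hlr) s = x₀ := by
  have hh (t : I) : h (t, x₀) = x₀ := h.eq_fst t rfl
  simp [track, hh]

theorem detour_base (hlr : l.comp r x₀ = x₀) (u s : ℝ) :
    detour h (base (l.comp r) hlr) u s = x₀ := by
  have hh (t : I) : h (t, x₀) = x₀ := h.eq_fst t rfl
  simp [detour, hh]

theorem shrink_base (hlr : l.comp r x₀ = x₀) (t s : ℝ) :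
    shrink h (base (l.comp r) hlr) t s = x₀ := by
  have hh (t : I) : h (t, x₀) = x₀ := h.eq_fst t rfl
  simp [shrink, hh, track_base]

/-- The self-map of the homotopy fiber of `l ∘ r` which prolongs paths by running back and forth
along `h`. -/
noncomputable def detourMap : C(HoFib (l.comp r) x₀, HoFib (l.comp r) x₀) :=
  lift point (fun a s ↦ detour h a (1 : I) (s - 2 * (1 - s))) (by fun_prop) (by fun_prop)
    (fun a ↦ by
      rw [detour_of_nonpos _ _ _ (by norm_num)]
      norm_num)
    (fun a ↦ by
      rw [detour_of_nonneg _ _ (by norm_num) (by norm_num)]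
      norm_num)

/-- Inserting the detour along `h` is homotopic to the identity. -/
noncomputable def detourHomotopy (hlr : l.comp r x₀ = x₀) :
    HomotopyRel (ContinuousMap.id (HoFib (l.comp r) x₀)) (detourMap h) {base (l.comp r) hlr} where
  toContinuousMap := lift (fun z ↦ z.2.point)
    (fun z s ↦ detour h z.2 z.1 (s - 2 * z.1 * (1 - s))) (by fun_prop) (by fun_prop)
    (by
      rintro ⟨u, a⟩
      have hu := u.2.1
      rw [detour_of_nonpos _ _ _ (by simpa using hu)]
      have : |-(2 * u : ℝ) + u| = u := by
        rw [abs_of_nonpos] <;> linarith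
      simp [this])
    (by
      rintro ⟨u, a⟩
      rw [detour_of_nonneg _ _ u.2.1 (by simp)]
      simp)
  map_zero_left a := by
    ext s
    · simp
    · simp [detour_of_nonneg _ _ le_rfl s.2.1]
  map_one_left a := by
    ext s
    · simp [detourMap]
    · simp [detourMap]
  prop' t := by
    rintro _ rfl
    ext s
    · simp
    · simp [detour_base]

/-- Moving along the tracks contracts the homotopy fiber of `l ∘ r`. -/
noncomputable def shrinkHomotopy (hlr : l.comp r x₀ = x₀) :
    HomotopyRel (detourMap h) (ContinuousMap.const _ (base (l.comp r) hlr))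
      {base (l.comp r) hlr} where
  toContinuousMap := lift (fun z ↦ track h z.2 (2 * z.1 - 1))
    (fun z s ↦ shrink h z.2 (2 * z.1 - 1) (s - 2 * (1 - s))) (by fun_prop) (by fun_prop)
    (by
      rintro ⟨t, a⟩
      rw [shrink_of_le _ _ _ (by norm_num)]
      norm_num)
    (by
      rintro ⟨t, a⟩
      have h₀ := t.2.1
      have h₁ := t.2.2
      rw [shrink_of_ge _ _ (by linarith) (by norm_num), max_eq_left]
      · norm_num
      · norm_num
        linarith)
  map_zero_left a := by
    ext s
    · simp [detourMap]
    · simp [detourMap, detour_one]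
  map_one_left a := by
    ext s
    · norm_num
    · have hh (t : I) : h (t, x₀) = x₀ := h.eq_fst t rfl
      have hs : (s : ℝ) - 2 * (1 - s) ≤ 1 := by linarith [s.2.2]
      have : (2 : ℝ) - 1 = 1 := by norm_num
      simp [this, shrink, hh, max_eq_right hs]
  prop' t := by
    rintro _ rfl
    ext s
    · simp [detourMap, track_base]
    · simp [detourMap, detour_base, shrink_base]

/-- The homotopy fiber of `l ∘ r` contracts to its basepoint, relative to the basepoint. -/
noncomputable def contraction (hlr : l.comp r x₀ = x₀) :
    HomotopyRel (ContinuousMap.id (HoFib (l.comp r) x₀))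
      (ContinuousMap.const _ (base (l.comp r) hlr)) {base (l.comp r) hlr} :=
  (detourHomotopy h hlr).trans (shrinkHomotopy h hlr)

end Retract

section Composition

variable (r : C(X, Y)) (l : C(Y, Z)) {z₀ : Z}

/-- The map `(x, δ) ↦ (r x, δ)` from the homotopy fiber of `l ∘ r` to that of `l`. -/
def map : C(HoFib (l.comp r) z₀, HoFib l z₀) :=
  lift (fun a ↦ r a.point) (fun a s ↦ a.path s) (by fun_prop) (by fun_prop) (by simp) (by simp)

variable {r l}

@[simp]
theorem map_point (a : HoFib (l.comp r) z₀) : (map r l a).point = r a.point := rfl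

@[simp]
theorem map_path (a : HoFib (l.comp r) z₀) (t : I) : (map r l a).path t = a.path t := rfl

/-- The deformation of the square underlying a point of the homotopy fiber of `map r l` onto its
edge over `l`, through squares with the same values on this edge and constant on the two edges
over the basepoint. -/
noncomputable def slide {hl : l y₀ = z₀} (b : HoFib (map r l) (base l hl)) (u t s : I) : Z :=
  (b.path (max t (s * clamp (2 * u)))).path (s * clamp (2 - 2 * u))

section slide

variable {hl : l y₀ = z₀} (b : HoFib (map r l) (base l hl))

theorem slide_edge (u t : I) : slide b u t 0 = l (b.path t).point := by
  simp [slide]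

theorem slide_left_one (u s : I) : slide b u 1 s = z₀ := by
  simp [slide, max_eq_left le_one']

theorem slide_right_one (u t : I) : slide b u t 1 = z₀ := by
  rcases le_total (2 * (u : ℝ)) 1 with hu | hu
  · simp [slide, clamp_of_one_le (show 1 ≤ 2 - 2 * (u : ℝ) by linarith)]
  · simp [slide, clamp_of_one_le hu, max_eq_right le_one']

theorem slide_zero (t s : I) : slide b 0 t s = (b.path t).path s := by
  simp [slide, clamp_of_one_le one_le_two]

theorem slide_one (t s : I) : slide b 1 t s = l (b.path (max t s)).point := by
  simp [slide, clamp_of_one_le one_le_two]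

@[fun_prop]
theorem continuous_slide {W : Type*} [TopologicalSpace W]
    {b : W → HoFib (map r l) (base l hl)} {u t s : W → I} (hb : Continuous b) (hu : Continuous u)
    (ht : Continuous t) (hs : Continuous s) : Continuous fun w ↦ slide (b w) (u w) (t w) (s w) := by
  unfold slide
  fun_prop

end slide

/-- The homotopy fiber of `r` is homotopy equivalent to the homotopy fiber of the map from the
homotopy fiber of `l ∘ r` to the homotopy fiber of `l`. -/
noncomputable def homotopyEquivMap (hl : l y₀ = z₀) :
    HomotopyEquiv (HoFib r y₀) (HoFib (map r l) (base l hl)) where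
  toFun := lift
    (lift point (fun a s ↦ l (a.path s)) (by fun_prop) (by fun_prop) (by simp) (by simp [hl]))
    (fun a t ↦ lift (fun z : HoFib r y₀ × I ↦ z.1.path z.2) (fun z s ↦ l (z.1.path (max z.2 s)))
      (by fun_prop) (by fun_prop) (by simp)
      (by simp [hl, max_eq_right le_one']) (a, t))
    (by fun_prop) (ContinuousMap.continuous _)
    (fun a ↦ by
      ext s
      · simp
      · simp)
    (fun a ↦ by
      ext s
      · simp
      · simp [max_eq_left le_one', hl])
  invFun := lift (fun b ↦ b.point.point) (fun b t ↦ (b.path t).point) (by fun_prop) (by fun_prop)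
    (by simp) (by simp)
  left_inv := Homotopic.refl _
  right_inv := by
    refine Homotopic.symm ⟨⟨lift
      (lift (fun z : I × HoFib (map r l) (base l hl) ↦ z.2.point.point)
        (fun z s ↦ slide z.2 z.1 0 s) (by fun_prop) (by fun_prop)
        (by simp [slide_edge]) (by simp [slide_right_one]))
      (fun z t ↦ lift (fun w : (I × HoFib (map r l) (base l hl)) × I ↦ (w.1.2.path w.2).point)
        (fun w s ↦ slide w.1.2 w.1.1 w.2 s) (by fun_prop) (by fun_prop)
        (by simp [slide_edge]) (by simp [slide_right_one]) (z, t))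
      (by fun_prop) (ContinuousMap.continuous _) ?_ ?_, ?_, ?_⟩⟩
    · rintro ⟨u, b⟩
      ext s <;> simp
    · rintro ⟨u, b⟩
      ext s <;> simp [slide_left_one]
    · intro b
      ext t s
      · simp
      · simp [slide_zero]
      · simp
      · simp [slide_zero]
    · intro b
      ext t s <;> simp [slide_one]

end Composition

end HoFib

/-- Let `r : X → Y` be a pointed map between pointed topological spaces, `l : Y → X` a pointed
map, and `h` a pointed homotopy from the identity of `X` to `l ∘ r` (so `l` is a left homotopy
inverse of `r`).  Then the homotopy fiber of `r` (over the basepoint) is homotopy equivalent to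
the loop space of the homotopy fiber of `l`. -/
theorem stmt0 {x₀ : X} {y₀ : Y} (r : C(X, Y)) (l : C(Y, X))
    (hr : r x₀ = y₀) (hl : l y₀ = x₀)
    (h : ContinuousMap.HomotopyRel (ContinuousMap.id X) (l.comp r) {x₀}) :
    Nonempty (ContinuousMap.HomotopyEquiv (HoFib r y₀)
      (Path (HoFib.base l hl) (HoFib.base l hl))) := by
  have hlr : l.comp r x₀ = x₀ := by simp [hr, hl]
  refine ⟨(HoFib.homotopyEquivMap hl).trans
    (HoFib.homotopyEquivLoop (HoFib.contraction h hlr) ?_)⟩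
  ext s
  · simp [hr]
  · simp
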